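/- For all n ≥ 0 and all I, J ∈ P_n, the (I,J) entry of B_n equals (−1)^{|I ∩ J|} if for every run I_k of I the intersection I_k ∩ J is a prefix of I_k and n ∉ I ∖ J, and equals 0 otherwise. -/

import Mathlib

/-!
The condition on runs is local: it says exactly that whenever `i` and `i + 1` both lie in `I` and
`i + 1` lies in `J`, then `i` lies in `J` (`forall_runs_iff_stepClosed`). In this form the entries
of `A_n` and `B_n` are computed by a simultaneous induction on `n`
(`Amat_apply_and_Bmat_apply`): `A_n` carries the local condition alone, and `B_n` carries in
addition `n ∉ I \ J`. If `n + 1 ∈ I ∩ J`, the only new instance of the local condition, at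
`i = n`, is precisely `n ∉ I \ J`, which is why the lower right block is `-B_n` for both matrices;
otherwise there is no new instance and the block is `A_n`, or `0` for `B_{n+1}` when
`n + 1 ∈ I \ J`.
-/

open Finset

/-- Restriction of a subset of `Fin (n+1)` to `Fin n` (forgetting the top element). -/
def resSet {n : ℕ} (I : Finset (Fin (n + 1))) : Finset (Fin n) :=
  Finset.univ.filter (fun j : Fin n => Fin.castSucc j ∈ I)

mutual
  /-- The matrix `A_n`, rows/columns indexed by subsets of `{1,…,n}` (element `j`
  of `[n]` corresponds to `j-1 : Fin n`, i.e. anti-lexicographic/binary order). -/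
  def Amat : (n : ℕ) → Matrix (Finset (Fin n)) (Finset (Fin n)) ℤ
    | 0 => Matrix.of fun _ _ => 1
    | n + 1 => Matrix.of fun I J =>
        if Fin.last n ∈ I then
          if Fin.last n ∈ J then - Bmat n (resSet I) (resSet J)
          else Amat n (resSet I) (resSet J)
        else Amat n (resSet I) (resSet J)
  /-- The matrix `B_n`. -/
  def Bmat : (n : ℕ) → Matrix (Finset (Fin n)) (Finset (Fin n)) ℤ
    | 0 => Matrix.of fun _ _ => 1
    | n + 1 => Matrix.of fun I J =>
        if Fin.last n ∈ I then
          if Fin.last n ∈ J then - Bmat n (resSet I) (resSet J)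
          else 0
        else Amat n (resSet I) (resSet J)
end

/-- The Walsh-Hadamard matrix `H_n`. -/
def Hmat : (n : ℕ) → Matrix (Finset (Fin n)) (Finset (Fin n)) ℤ
  | 0 => Matrix.of fun _ _ => 1
  | n + 1 => Matrix.of fun I J =>
      if Fin.last n ∈ I ∧ Fin.last n ∈ J then - Hmat n (resSet I) (resSet J)
      else Hmat n (resSet I) (resSet J)

/-- The Möbius matrix `M_n` of the boolean lattice. -/
def Mobmat (n : ℕ) : Matrix (Finset (Fin n)) (Finset (Fin n)) ℤ :=
  Matrix.of fun I J => if I ⊆ J then (-1) ^ (J \ I).card else 0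

/-- The zeta matrix `Z_n` of the boolean lattice. -/
def Zetamat (n : ℕ) : Matrix (Finset (Fin n)) (Finset (Fin n)) ℤ :=
  Matrix.of fun I J => if I ⊆ J then 1 else 0

/-- The subset of `[n] = {1,…,n}` corresponding to a subset of `Fin n`. -/
def natSet {n : ℕ} (I : Finset (Fin n)) : Finset ℕ := Finset.image (fun j : Fin n => (j : ℕ) + 1) I

/-- The ordinal number of a subset in the anti-lexicographic order. -/
def ordFin {n : ℕ} (I : Finset (Fin n)) : ℕ := ∑ j ∈ I, 2 ^ (j : ℕ)

/-- The run (maximal interval of consecutive integers) of `I` containing `j`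
(empty if `j ∉ I`). -/
def runOf (I : Finset ℕ) (j : ℕ) : Finset ℕ :=
  I.filter (fun i => ∀ k ∈ Finset.Icc (min i j) (max i j), k ∈ I)

/-- The set of runs (maximal intervals of consecutive integers) of `I`. -/
def runsOf (I : Finset ℕ) : Finset (Finset ℕ) := I.image (runOf I)

/-- `P` is a prefix of the interval `R`: it consists of an initial segment of `R`. -/
def IsPrefixOf (P R : Finset ℕ) : Prop :=
  P ⊆ R ∧ ∀ i ∈ R, ∀ j ∈ P, i ≤ j → i ∈ P


/-- Descent inside `I` preserves membership in `J`: the local form of the condition that `J` meets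
every run of `I` in a prefix. -/
def StepClosed (I J : Finset ℕ) : Prop :=
  ∀ i, i ∈ I → i + 1 ∈ I → i + 1 ∈ J → i ∈ J

lemma mem_runOf {I : Finset ℕ} {i j : ℕ} :
    i ∈ runOf I j ↔ i ∈ I ∧ ∀ k, min i j ≤ k → k ≤ max i j → k ∈ I := by
  simp only [runOf, Finset.mem_filter, Finset.mem_Icc, and_imp]

lemma StepClosed.mem_of_le {I J : Finset ℕ} (h : StepClosed I J) {i j : ℕ} (hij : i ≤ j)
    (hI : ∀ k, i ≤ k → k ≤ j → k ∈ I) (hj : j ∈ J) : i ∈ J := by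
  induction j, hij using Nat.le_induction with
  | base => exact hj
  | succ j hij ih =>
    exact ih (fun k h1 h2 => hI k h1 (by omega))
      (h j (hI j hij (by omega)) (hI (j + 1) (by omega) le_rfl) hj)

lemma forall_runs_iff_stepClosed (I J : Finset ℕ) :
    (∀ R ∈ runsOf I, IsPrefixOf (R ∩ J) R) ↔ StepClosed I J := by
  constructor
  · intro h i hi hi' hj
    have hR := h (runOf I (i + 1)) (Finset.mem_image_of_mem _ hi')
    have hmem : ∀ k, i ≤ k → k ≤ i + 1 → k ∈ I := by
      intro k h1 h2
      obtain rfl | rfl : k = i ∨ k = i + 1 := by omega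
      exacts [hi, hi']
    have h1 : i ∈ runOf I (i + 1) :=
      mem_runOf.2 ⟨hi, fun k h1 h2 => hmem k (by omega) (by omega)⟩
    have h2 : i + 1 ∈ runOf I (i + 1) :=
      mem_runOf.2 ⟨hi', fun k h1 h2 => hmem k (by omega) (by omega)⟩
    exact (Finset.mem_inter.1
      (hR.2 i h1 (i + 1) (Finset.mem_inter.2 ⟨h2, hj⟩) (by omega))).2
  · intro h R hR
    obtain ⟨a, -, rfl⟩ := Finset.mem_image.1 hR
    refine ⟨Finset.inter_subset_left, fun i hi j hj hij => ?_⟩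
    obtain ⟨hjR, hjJ⟩ := Finset.mem_inter.1 hj
    refine Finset.mem_inter.2 ⟨hi, h.mem_of_le hij (fun k h1 h2 => ?_) hjJ⟩
    -- Both `i` and `j` are joined to `a` within `I`, so the segment from `i` to `j` is covered.
    rcases le_total k a with hk | hk
    · exact (mem_runOf.1 hi).2 k (by omega) (by omega)
    · exact (mem_runOf.1 hjR).2 k (by omega) (by omega)

lemma mem_natSet {n : ℕ} {I : Finset (Fin n)} {m : ℕ} :
    m ∈ natSet I ↔ ∃ h : m - 1 < n, 0 < m ∧ (⟨m - 1, h⟩ : Fin n) ∈ I := by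
  simp only [natSet, Finset.mem_image]
  constructor
  · rintro ⟨j, hj, rfl⟩
    exact ⟨by simp, by simp, by simpa using hj⟩
  · rintro ⟨h, hm, hI⟩
    exact ⟨_, hI, by simp only; omega⟩

lemma le_of_mem_natSet {n : ℕ} {I : Finset (Fin n)} {m : ℕ} (h : m ∈ natSet I) : m ≤ n := by
  obtain ⟨h, -, -⟩ := mem_natSet.1 h
  omega

lemma mem_natSet_resSet {n : ℕ} {I : Finset (Fin (n + 1))} {m : ℕ} :
    m ∈ natSet (resSet I) ↔ m ∈ natSet I ∧ m ≤ n := by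
  simp only [mem_natSet, resSet, Finset.mem_filter, Finset.mem_univ, true_and, Fin.castSucc_mk]
  constructor
  · rintro ⟨h, hm, hI⟩
    exact ⟨⟨by omega, hm, hI⟩, by omega⟩
  · rintro ⟨⟨h, hm, hI⟩, hn⟩
    exact ⟨by omega, hm, hI⟩

lemma succ_mem_natSet {n : ℕ} {I : Finset (Fin (n + 1))} :
    n + 1 ∈ natSet I ↔ Fin.last n ∈ I := by
  simp [mem_natSet, Fin.last]

lemma card_inter_eq {n : ℕ} (I J : Finset (Fin (n + 1))) :
    (I ∩ J).card = (resSet I ∩ resSet J).card +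
      if Fin.last n ∈ I ∧ Fin.last n ∈ J then 1 else 0 := by
  have h : ∀ (m : ℕ) (S : Finset (Fin m)), S.card = ∑ i, if i ∈ S then 1 else 0 := by simp
  rw [h, h n, Fin.sum_univ_castSucc]
  simp [resSet]

lemma stepClosed_succ {n : ℕ} (I J : Finset (Fin (n + 1))) :
    StepClosed (natSet I) (natSet J) ↔
      StepClosed (natSet (resSet I)) (natSet (resSet J)) ∧
        (Fin.last n ∈ I → Fin.last n ∈ J →
          n ∉ natSet (resSet I) \ natSet (resSet J)) := by
  simp only [StepClosed, Finset.mem_sdiff, mem_natSet_resSet, ← succ_mem_natSet]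
  constructor
  · intro h
    refine ⟨fun i h1 h2 h3 => ⟨h i h1.1 h2.1 h3.1, h1.2⟩, fun h1 h2 h3 => ?_⟩
    exact h3.2 ⟨h n h3.1.1 h1 h2, le_rfl⟩
  · rintro ⟨h, h'⟩ i h1 h2 h3
    have hi := le_of_mem_natSet h2
    by_cases hin : i = n
    · subst hin
      by_contra hJ
      exact h' h2 h3 ⟨⟨h1, le_rfl⟩, fun hc => hJ hc.1⟩
    · exact (h i ⟨h1, by omega⟩ ⟨h2, by omega⟩ ⟨h3, by omega⟩).1

open Classical in
/-- The entries of both matrices; the two formulas have to be proved together because the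
recursions for `A_n` and `B_n` refer to each other. -/
lemma Amat_apply_and_Bmat_apply (n : ℕ) : ∀ I J : Finset (Fin n),
    (Amat n I J = if StepClosed (natSet I) (natSet J) then (-1) ^ (I ∩ J).card else 0) ∧
    (Bmat n I J = if StepClosed (natSet I) (natSet J) ∧ n ∉ natSet I \ natSet J then
      (-1) ^ (I ∩ J).card else 0) := by
  induction n with
  | zero =>
    intro I J
    have hI : I = ∅ := Subsingleton.elim _ _
    subst hI
    simp [Amat, Bmat, StepClosed, natSet]
  | succ n ih =>
    intro I J
    obtain ⟨ihA, ihB⟩ := ih (resSet I) (resSet J)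
    simp only [Amat, Bmat, Matrix.of_apply, ihA, ihB, card_inter_eq I J, stepClosed_succ I J,
      Finset.mem_sdiff (a := n + 1), succ_mem_natSet]
    by_cases hI : Fin.last n ∈ I <;> by_cases hJ : Fin.last n ∈ J <;>
      simp [hI, hJ, pow_succ, apply_ite Neg.neg]

/-- Explicit formula for the entries of `B_n`: the `(I,J)` entry is
`(-1)^{|I ∩ J|}` if every run `I_k` of `I` meets `J` in a prefix of `I_k` and
`n ∉ I \ J`, and `0` otherwise. -/
theorem Bmat_entries (n : ℕ) (I J : Finset (Fin n)) :
    (((∀ R ∈ runsOf (natSet I), IsPrefixOf (R ∩ natSet J) R) ∧ n ∉ natSet I \ natSet J) →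
      Bmat n I J = (-1) ^ (I ∩ J).card) ∧
    (¬ ((∀ R ∈ runsOf (natSet I), IsPrefixOf (R ∩ natSet J) R) ∧ n ∉ natSet I \ natSet J) →
      Bmat n I J = 0) := by
  classical
  rw [forall_runs_iff_stepClosed, (Amat_apply_and_Bmat_apply n I J).2]
  exact ⟨fun h => if_pos h, fun h => if_neg h⟩
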